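/- arXiv:1703.04972 — 2 statements merged into one kernel-verified Lean document; each statement's English description precedes it below -/
import Mathlib

section
/- In the Hantzsche–Wendt group Δ_P with generators x, y as in its presentation, the subgroup generated by x², y², and (xy)² is a normal subgroup which is free abelian of rank 3, and the quotient of Δ_P by this subgroup is isomorphic to the Klein four-group C₂ × C₂. -/
open FreeGroup in
/-- Relators of the Hantzsche–Wendt group: `x⁻¹y²xy²` and `y⁻¹x²yx²`,
encoding the relations `x⁻¹y²x = y⁻²` and `y⁻¹x²y = x⁻²`. -/
def hwRels : Set (FreeGroup (Fin 2)) :=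
  {(of 0)⁻¹ * of 1 ^ 2 * of 0 * of 1 ^ 2,
   (of 1)⁻¹ * of 0 ^ 2 * of 1 * of 0 ^ 2}

/-- The Hantzsche–Wendt group `Δ_P = ⟨x, y ∣ x⁻¹y²x = y⁻², y⁻¹x²y = x⁻²⟩`. -/
abbrev HantzscheWendtGroup : Type := PresentedGroup hwRels

/-- The generator `x` of the Hantzsche–Wendt group. -/
def hwX : HantzscheWendtGroup := PresentedGroup.of 0

/-- The generator `y` of the Hantzsche–Wendt group. -/
def hwY : HantzscheWendtGroup := PresentedGroup.of 1

/-!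
Each of the generators `x`, `y` conjugates each of `x²`, `y²`, `(xy)²` to itself or to its inverse,
so these three elements commute pairwise and generate a normal subgroup. The group acts on `ℝ³` by
screw motions, `x²`, `y²` and `(xy)²` acting as translations along the three coordinate axes; since
these translations are linearly independent, the subgroup is free abelian of rank 3. In the quotient
`x`, `y` and `xy` square to the identity, so it has at most the four elements `1`, `x`, `y`, `xy`,
and the map to `C₂ × C₂` with `x ↦ (1, 0)`, `y ↦ (0, 1)` separates them.
-/

section ConjugationByInversion

variable {G : Type*} [Group G] {g t : G} {S T : Set G}

theorem inv_mul_mul_mul_eq_one_iff_semiconjBy_inv :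
    g⁻¹ * t * g * t = 1 ↔ SemiconjBy g t t⁻¹ := by
  rw [SemiconjBy, eq_inv_mul_iff_mul_eq, mul_assoc, mul_assoc, inv_mul_eq_one, eq_comm]

theorem semiconjBy_inv_swap (h : SemiconjBy g t t⁻¹) : SemiconjBy g t⁻¹ t := by
  simpa only [inv_inv] using h.inv_right

theorem inv_semiconjBy_inv (h : SemiconjBy g t t⁻¹) : SemiconjBy g⁻¹ t t⁻¹ :=
  (semiconjBy_inv_swap h).inv_symm_left

theorem commute_sq_of_semiconjBy_inv (h : SemiconjBy g t t⁻¹) : Commute (g ^ 2) t :=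
  sq g ▸ (semiconjBy_inv_swap h).mul_left h

theorem mem_normalizer_closure_of_commute_or_semiconjBy_inv
    (h : ∀ s ∈ S, Commute g s ∨ SemiconjBy g s s⁻¹) :
    g ∈ Subgroup.normalizer (Subgroup.closure S : Set G) := by
  have conj_eq : ∀ s ∈ S, MulAut.conj g s = s ∨ MulAut.conj g s = s⁻¹ := fun s hs =>
    (h s hs).imp (fun hc => mul_inv_eq_of_eq_mul hc.eq) fun hi => mul_inv_eq_of_eq_mul hi.eq
  rw [Subgroup.mem_normalizer_iff_map_conj_eq, MonoidHom.map_closure]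
  apply le_antisymm <;> rw [Subgroup.closure_le]
  · rintro _ ⟨s, hs, rfl⟩
    have mem := Subgroup.mem_closure_of_mem hs
    rcases conj_eq s hs with e | e <;> simpa [e] using mem
  · intro s hs
    have mem := Subgroup.mem_closure_of_mem (Set.mem_image_of_mem (MulAut.conj g) hs)
    rcases conj_eq s hs with e | e <;> simpa [e] using mem

theorem normal_closure_of_commute_or_semiconjBy_inv (hT : Subgroup.closure T = ⊤)
    (h : ∀ t ∈ T, ∀ s ∈ S, Commute t s ∨ SemiconjBy t s s⁻¹) :
    (Subgroup.closure S).Normal := by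
  rw [← Subgroup.normalizer_eq_top_iff, eq_top_iff, ← hT, Subgroup.closure_le]
  exact fun t ht => mem_normalizer_closure_of_commute_or_semiconjBy_inv (h t ht)

end ConjugationByInversion

section CommutingFamily

variable {ι G H A : Type*} [Group G] [Group H] [AddCommGroup A] {g : ι → G}

theorem pairwise_commute_zpowersHom (hg : ∀ i j, Commute (g i) (g j)) :
    Pairwise fun i j => ∀ m n, Commute (zpowersHom G (g i) m) (zpowersHom G (g j) n) :=
  fun i j _ _ _ => (hg i j).zpow_zpow _ _

variable [Fintype ι]

/-- The homomorphism `v ↦ ∏ i, g i ^ v i` from `ℤ^ι` attached to a finite family of pairwise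
commuting elements of a group. -/
def zpowersPiHom (hg : ∀ i j, Commute (g i) (g j)) : Multiplicative (ι → ℤ) →* G :=
  (MonoidHom.noncommPiCoprod _ (pairwise_commute_zpowersHom hg)).comp
    (MulEquiv.funMultiplicative ι ℤ).toMonoidHom

theorem range_zpowersPiHom (hg : ∀ i j, Commute (g i) (g j)) :
    (zpowersPiHom hg).range = Subgroup.closure (Set.range g) := by
  rw [zpowersPiHom, MonoidHom.range_comp,
    MonoidHom.range_eq_top_of_surjective _ (MulEquiv.surjective _), ← MonoidHom.range_eq_map,
    MonoidHom.noncommPiCoprod_range, ← Set.iUnion_singleton_eq_range, Subgroup.closure_iUnion]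
  simp only [Subgroup.range_zpowersHom, Subgroup.zpowers_eq_closure]

theorem map_zpowersPiHom_eq_map_sum (hg : ∀ i j, Commute (g i) (g j))
    {f : G →* H} {τ : Multiplicative A →* H} {t : ι → A}
    (hf : ∀ i, f (g i) = τ (Multiplicative.ofAdd (t i))) (v : Multiplicative (ι → ℤ)) :
    f (zpowersPiHom hg v) = τ (Multiplicative.ofAdd (∑ i, v.toAdd i • t i)) := by
  have comm : ((Finset.univ : Finset ι) : Set ι).Pairwise
      (Function.onFun Commute fun i => g i ^ v.toAdd i) :=
    fun i _ j _ _ => (hg i j).zpow_zpow _ _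
  calc f (zpowersPiHom hg v)
      = Finset.univ.noncommProd (fun i => f (g i ^ v.toAdd i))
          fun i hi j hj hij => (comm hi hj hij).map f := Finset.map_noncommProd _ _ comm f
    _ = Finset.univ.noncommProd (fun i => τ (Multiplicative.ofAdd (v.toAdd i • t i)))
          fun i _ j _ _ => (Commute.all _ _).map τ :=
        Finset.noncommProd_congr rfl (fun i _ => by rw [map_zpow, hf, ofAdd_zsmul, map_zpow]) _
    _ = τ (Multiplicative.ofAdd (∑ i, v.toAdd i • t i)) := by
        rw [ofAdd_sum, ← Finset.noncommProd_eq_prod]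
        exact (Finset.map_noncommProd _ _ _ _).symm

theorem zpowersPiHom_injective_of_linearIndependent
    (hg : ∀ i j, Commute (g i) (g j)) {f : G →* H} {τ : Multiplicative A →* H}
    (hτ : Function.Injective τ) {t : ι → A} (ht : LinearIndependent ℤ t)
    (hf : ∀ i, f (g i) = τ (Multiplicative.ofAdd (t i))) :
    Function.Injective (zpowersPiHom hg) := by
  rw [injective_iff_map_eq_one]
  intro v hv
  have sum_eq_zero : ∑ i, v.toAdd i • t i = 0 := by
    rw [← ofAdd_eq_one, ← map_eq_one_iff τ hτ, ← map_zpowersPiHom_eq_map_sum hg hf, hv, map_one]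
  exact Multiplicative.toAdd.injective
    (funext (Fintype.linearIndependent_iff.mp ht v.toAdd sum_eq_zero))

end CommutingFamily

section KleinFour

variable {G : Type*} [Group G] {a b : G}

theorem mem_closure_pair_of_sq_eq_one (ha : a ^ 2 = 1) (hb : b ^ 2 = 1)
    (hab : (a * b) ^ 2 = 1) {g : G} (hg : g ∈ Subgroup.closure {a, b}) :
    g = 1 ∨ g = a ∨ g = b ∨ g = a * b := by
  rw [sq] at ha hb hab
  have inv_a : a⁻¹ = a := inv_eq_of_mul_eq_one_left ha
  have inv_b : b⁻¹ = b := inv_eq_of_mul_eq_one_left hb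
  have comm : b * a = a * b := by
    rw [← inv_eq_of_mul_eq_one_left hab, mul_inv_rev, inv_a, inv_b]
  induction hg using Subgroup.closure_induction_right with
  | one => exact .inl rfl
  | mul_right g _ c hc ih => rcases hc with rfl | rfl <;> grind
  | mul_inv_cancel g _ c hc ih => rcases hc with rfl | rfl <;> grind

theorem bijective_hom_kleinFour_of_sq_eq_one
    (ha : a ^ 2 = 1) (hb : b ^ 2 = 1) (hab : (a * b) ^ 2 = 1)
    (hgen : Subgroup.closure {a, b} = ⊤) {φ : G →* Multiplicative (ZMod 2 × ZMod 2)}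
    (hφa : φ a = Multiplicative.ofAdd (1, 0)) (hφb : φ b = Multiplicative.ofAdd (0, 1)) :
    Function.Bijective φ := by
  constructor
  · rw [injective_iff_map_eq_one]
    intro g hg
    rcases mem_closure_pair_of_sq_eq_one ha hb hab (hgen ▸ Subgroup.mem_top g) with
      rfl | rfl | rfl | rfl
    · rfl
    all_goals
      simp only [map_mul, hφa, hφb] at hg
      exact absurd hg (by decide)
  · have cases_image : ∀ z, φ 1 = z ∨ φ a = z ∨ φ b = z ∨ φ (a * b) = z := by
      simp only [map_one, map_mul, hφa, hφb]
      decide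
    intro z
    rcases cases_image z with h | h | h | h <;> exact ⟨_, h⟩

theorem nonempty_quotient_closure_squares_mulEquiv
    [(Subgroup.closure {a ^ 2, b ^ 2, (a * b) ^ 2}).Normal]
    (hgen : Subgroup.closure {a, b} = ⊤) {φ : G →* Multiplicative (ZMod 2 × ZMod 2)}
    (hφa : φ a = Multiplicative.ofAdd (1, 0)) (hφb : φ b = Multiplicative.ofAdd (0, 1)) :
    Nonempty (G ⧸ Subgroup.closure {a ^ 2, b ^ 2, (a * b) ^ 2} ≃*
      Multiplicative (ZMod 2 × ZMod 2)) := by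
  set N := Subgroup.closure {a ^ 2, b ^ 2, (a * b) ^ 2} with hN
  have le_ker : N ≤ φ.ker := by
    have sq_eq_one : ∀ z : Multiplicative (ZMod 2 × ZMod 2), z ^ 2 = 1 := by decide
    rw [hN, Subgroup.closure_le]
    rintro _ (rfl | rfl | rfl) <;> exact (map_pow φ _ 2).trans (sq_eq_one _)
  have mk_sq_eq_one : ∀ g, g ^ 2 ∈ ({a ^ 2, b ^ 2, (a * b) ^ 2} : Set G) →
      (QuotientGroup.mk' N g) ^ 2 = 1 := fun g hg =>
    (QuotientGroup.eq_one_iff (g ^ 2)).mpr (Subgroup.subset_closure hg)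
  have quotient_gen :
      Subgroup.closure {QuotientGroup.mk' N a, QuotientGroup.mk' N b} = ⊤ := by
    rw [← Set.image_pair, ← MonoidHom.map_closure, hgen, ← MonoidHom.range_eq_map,
      QuotientGroup.range_mk']
  exact ⟨MulEquiv.ofBijective (QuotientGroup.lift N φ le_ker) <|
    bijective_hom_kleinFour_of_sq_eq_one (mk_sq_eq_one a (by simp)) (mk_sq_eq_one b (by simp))
      (mk_sq_eq_one (a * b) (by simp)) quotient_gen hφa hφb⟩

end KleinFour

/-- A pair of elements of a group satisfying the two defining relations of the Hantzsche–Wendt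
group, stated as: each of the two conjugates the square of the other to its inverse. -/
structure IsHantzscheWendtPair {G : Type*} [Group G] (x y : G) : Prop where
  left_inverts_sq_right : SemiconjBy x (y ^ 2) (y ^ 2)⁻¹
  right_inverts_sq_left : SemiconjBy y (x ^ 2) (x ^ 2)⁻¹

namespace IsHantzscheWendtPair

variable {G : Type*} [Group G] {x y : G}

theorem left_inverts_sq_mul (h : IsHantzscheWendtPair x y) :
    SemiconjBy x ((x * y) ^ 2) ((x * y) ^ 2)⁻¹ := by
  have x_sq_mul_y : x ^ 2 * y = y * (x ^ 2)⁻¹ :=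
    (semiconjBy_inv_swap h.right_inverts_sq_left).eq.symm
  have x_inv_mul_y_sq : x⁻¹ * y ^ 2 = (y ^ 2)⁻¹ * x⁻¹ :=
    (inv_semiconjBy_inv h.left_inverts_sq_right).eq
  calc x * (x * y) ^ 2
      = x ^ 2 * y * (x * y) := by simp only [sq, mul_assoc]
    _ = y * (x⁻¹ * y ^ 2) * y⁻¹ := by rw [x_sq_mul_y]; group
    _ = ((x * y) ^ 2)⁻¹ * x := by rw [x_inv_mul_y_sq]; simp only [sq]; group

theorem right_inverts_sq_mul (h : IsHantzscheWendtPair x y) :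
    SemiconjBy y ((x * y) ^ 2) ((x * y) ^ 2)⁻¹ := by
  simpa only [inv_mul_cancel_left] using
    (inv_semiconjBy_inv h.left_inverts_sq_mul).mul_left (Commute.self_pow (x * y) 2)

theorem commute_squares (h : IsHantzscheWendtPair x y) (i j : Fin 3) :
    Commute (![x ^ 2, y ^ 2, (x * y) ^ 2] i) (![x ^ 2, y ^ 2, (x * y) ^ 2] j) := by
  have hxy := commute_sq_of_semiconjBy_inv h.left_inverts_sq_right
  have hxz := commute_sq_of_semiconjBy_inv h.left_inverts_sq_mul
  have hyz := commute_sq_of_semiconjBy_inv h.right_inverts_sq_mul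
  fin_cases i <;> fin_cases j <;>
    first | exact Commute.refl _ | assumption | exact Commute.symm (by assumption)

theorem normal_closure_squares (h : IsHantzscheWendtPair x y)
    (hgen : Subgroup.closure {x, y} = ⊤) :
    (Subgroup.closure {x ^ 2, y ^ 2, (x * y) ^ 2}).Normal := by
  refine normal_closure_of_commute_or_semiconjBy_inv hgen ?_
  rintro _ (rfl | rfl) _ (rfl | rfl | rfl)
  · exact .inl (Commute.self_pow _ 2)
  · exact .inr h.left_inverts_sq_right
  · exact .inr h.left_inverts_sq_mul
  · exact .inr h.right_inverts_sq_left
  · exact .inl (Commute.self_pow _ 2)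
  · exact .inr h.right_inverts_sq_mul

/-- The homomorphism from the Hantzsche–Wendt group with `hwX ↦ x` and `hwY ↦ y`, given by the
universal property of its presentation. -/
def lift (h : IsHantzscheWendtPair x y) : HantzscheWendtGroup →* G :=
  PresentedGroup.toGroup (f := ![x, y]) <| by
    rintro r (rfl | rfl) <;>
      simp only [map_mul, map_inv, map_pow, FreeGroup.lift_apply_of, Matrix.cons_val_zero,
        Matrix.cons_val_one, inv_mul_mul_mul_eq_one_iff_semiconjBy_inv]
    exacts [h.left_inverts_sq_right, h.right_inverts_sq_left]

theorem lift_hwX (h : IsHantzscheWendtPair x y) : h.lift hwX = x :=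
  PresentedGroup.toGroup.of _

theorem lift_hwY (h : IsHantzscheWendtPair x y) : h.lift hwY = y :=
  PresentedGroup.toGroup.of _

end IsHantzscheWendtPair

theorem isHantzscheWendtPair_hwX_hwY : IsHantzscheWendtPair hwX hwY where
  left_inverts_sq_right := inv_mul_mul_mul_eq_one_iff_semiconjBy_inv.mp <|
    PresentedGroup.one_of_mem (rels := hwRels) (Or.inl rfl)
  right_inverts_sq_left := inv_mul_mul_mul_eq_one_iff_semiconjBy_inv.mp <|
    PresentedGroup.one_of_mem (rels := hwRels) (Or.inr rfl)

theorem closure_hwX_hwY : Subgroup.closure {hwX, hwY} = ⊤ := by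
  rw [← PresentedGroup.closure_range_of hwRels]
  congr 1
  ext g
  simp only [Set.mem_insert_iff, Set.mem_singleton_iff, Set.mem_range, Fin.exists_fin_two,
    hwX, hwY, eq_comm]

theorem isHantzscheWendtPair_kleinFour :
    IsHantzscheWendtPair (Multiplicative.ofAdd ((1, 0) : ZMod 2 × ZMod 2))
      (Multiplicative.ofAdd ((0, 1) : ZMod 2 × ZMod 2)) where
  left_inverts_sq_right := by rw [SemiconjBy]; decide
  right_inverts_sq_left := by rw [SemiconjBy]; decide

/-- The screw motion of `ℤ³` by which `hwX` acts in the crystallographic realization of the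
Hantzsche–Wendt group. Coordinates are scaled by two, so that the half-unit shifts of the screw
motions of `ℝ³` become integral. -/
def screwX : Equiv.Perm (Fin 3 → ℤ) where
  toFun v := ![v 0 + 1, -v 1, 1 - v 2]
  invFun v := ![v 0 - 1, -v 1, 1 - v 2]
  left_inv v := by ext i; fin_cases i <;> simp
  right_inv v := by ext i; fin_cases i <;> simp

/-- The screw motion of `ℤ³` by which `hwY` acts, in the same coordinates as `screwX`. -/
def screwY : Equiv.Perm (Fin 3 → ℤ) where
  toFun v := ![-v 0, v 1 + 1, -v 2]
  invFun v := ![-v 0, v 1 - 1, -v 2]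
  left_inv v := by ext i; fin_cases i <;> simp
  right_inv v := by ext i; fin_cases i <;> simp

theorem isHantzscheWendtPair_screws : IsHantzscheWendtPair screwX screwY where
  left_inverts_sq_right := by
    ext v j
    fin_cases j <;> simp [screwX, screwY, sq, sub_eq_add_neg, add_comm]
  right_inverts_sq_left := by
    ext v j
    fin_cases j <;> simp [screwX, screwY, sq, sub_eq_add_neg, add_comm]

theorem screw_squares_eq_translation (i : Fin 3) :
    ![screwX ^ 2, screwY ^ 2, (screwX * screwY) ^ 2] i =
      MulAction.toPermHom (Multiplicative (Fin 3 → ℤ)) (Fin 3 → ℤ)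
        (Multiplicative.ofAdd (Pi.single i 2)) := by
  ext v j
  fin_cases i <;> fin_cases j <;> simp [screwX, screwY, sq] <;> ring

theorem zpowersPiHom_hw_squares_injective :
    Function.Injective (zpowersPiHom isHantzscheWendtPair_hwX_hwY.commute_squares) := by
  have translation_injective : Function.Injective
      (MulAction.toPermHom (Multiplicative (Fin 3 → ℤ)) (Fin 3 → ℤ)) := fun u v huv => by
    have translate_zero : u.toAdd + 0 = v.toAdd + 0 := DFunLike.congr_fun huv 0
    simpa only [add_zero, EmbeddingLike.apply_eq_iff_eq] using translate_zero
  refine zpowersPiHom_injective_of_linearIndependent _ (f := isHantzscheWendtPair_screws.lift)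
    translation_injective
    (Pi.linearIndependent_single_of_ne_zero (v := fun _ => (2 : ℤ)) fun _ => two_ne_zero) ?_
  intro i
  rw [← screw_squares_eq_translation]
  fin_cases i <;>
    simp [IsHantzscheWendtPair.lift_hwX, IsHantzscheWendtPair.lift_hwY]

theorem nonempty_closure_hw_squares_mulEquiv :
    Nonempty (Subgroup.closure {hwX ^ 2, hwY ^ 2, (hwX * hwY) ^ 2} ≃*
      Multiplicative (Fin 3 → ℤ)) := by
  have range_eq := range_zpowersPiHom isHantzscheWendtPair_hwX_hwY.commute_squares
  simp only [Matrix.range_cons, Matrix.range_empty, Set.union_empty, Set.singleton_union]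
    at range_eq
  exact ⟨(MulEquiv.subgroupCongr range_eq.symm).trans
    (MonoidHom.ofInjective zpowersPiHom_hw_squares_injective).symm⟩

/-- In the Hantzsche–Wendt group, the subgroup generated by `x²`, `y²` and `(xy)²` is
normal, free abelian of rank 3, and the quotient by it is the Klein four-group. -/
theorem hw_translation_subgroup (N : Subgroup HantzscheWendtGroup)
    (hN : N = Subgroup.closure {hwX ^ 2, hwY ^ 2, (hwX * hwY) ^ 2}) :
    ∃ hnormal : N.Normal,
      Nonempty (N ≃* Multiplicative (Fin 3 → ℤ)) ∧
      Nonempty ((HantzscheWendtGroup ⧸ N) ≃* Multiplicative (ZMod 2 × ZMod 2)) := by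
  subst hN
  have hnormal := isHantzscheWendtPair_hwX_hwY.normal_closure_squares closure_hwX_hwY
  exact ⟨hnormal, nonempty_closure_hw_squares_mulEquiv,
    nonempty_quotient_closure_squares_mulEquiv closure_hwX_hwY
      isHantzscheWendtPair_kleinFour.lift_hwX isHantzscheWendtPair_kleinFour.lift_hwY⟩
end

section
/- For every natural number k, the free abelian group ℤᵏ is diffuse. -/
/-- A group `G` is diffuse if every finite nonempty subset `A` of `G` has an extremal point,
i.e. an element `a ∈ A` such that for every `g ≠ 1`, either `g*a ∉ A` or `g⁻¹*a ∉ A`. -/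
def IsDiffuse (G : Type*) [Group G] : Prop :=
  ∀ A : Finset G, A.Nonempty →
    ∃ a ∈ A, ∀ g : G, g ≠ 1 → g * a ∉ A ∨ g⁻¹ * a ∉ A

/-!
In a commutative group, a product `a * b` that is represented only once in `A * A` must be a square,
because `b * a` represents it too. If `g * a` and `g⁻¹ * a` both lie in `A`, their product is again
`a * a`, so uniqueness forces `g = 1`, and `a` is extremal. Unique products exist in finitely
generated torsion-free commutative groups, and diffuseness only has to be tested on finitely
generated subgroups.
-/

/-- The extremal points of a finite set, as in the definition of a diffuse group. -/
def IsExtremalPoint {G : Type*} [Group G] (A : Finset G) (a : G) : Prop :=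
  a ∈ A ∧ ∀ g : G, g ≠ 1 → g * a ∉ A ∨ g⁻¹ * a ∉ A

theorem eq_of_uniqueMul_self {M : Type*} [CommMagma M] {A : Finset M} {a b : M} (ha : a ∈ A)
    (hb : b ∈ A) (h : UniqueMul A A a b) : a = b :=
  (h hb ha (mul_comm b a)).2

theorem isExtremalPoint_of_uniqueMul_self {G : Type*} [CommGroup G] {A : Finset G} {a : G}
    (ha : a ∈ A) (h : UniqueMul A A a a) : IsExtremalPoint A a := by
  refine ⟨ha, fun g hg => ?_⟩
  by_contra! ⟨hga, hga'⟩
  have hmul : g * a * (g⁻¹ * a) = a * a := by rw [mul_mul_mul_comm, mul_inv_cancel, one_mul]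
  exact hg (mul_eq_right.mp (h hga hga' hmul).1)

theorem isDiffuse_of_uniqueProds (G : Type*) [CommGroup G] [UniqueProds G] : IsDiffuse G := by
  intro A hA
  obtain ⟨a, ha, b, hb, hab⟩ := UniqueProds.uniqueMul_of_nonempty hA hA
  obtain rfl : a = b := eq_of_uniqueMul_self ha hb hab
  exact ⟨a, isExtremalPoint_of_uniqueMul_self ha hab⟩

theorem isExtremalPoint_of_subtype {G : Type*} [Group G] {H : Subgroup G}
    [DecidablePred (· ∈ H)] {A : Finset G} (hA : ∀ x ∈ A, x ∈ H) {a : H}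
    (ha : IsExtremalPoint (A.subtype (· ∈ H)) a) :
    IsExtremalPoint A (a : G) := by
  refine ⟨Finset.mem_subtype.mp ha.1, fun g hg => ?_⟩
  by_contra! ⟨hga, hga'⟩
  have hgH : g ∈ H := (H.mul_mem_cancel_right a.2).mp (hA _ hga)
  have hg' : (⟨g, hgH⟩ : H) ≠ 1 := by simpa using hg
  exact (ha.2 ⟨g, hgH⟩ hg').elim (· (Finset.mem_subtype.mpr hga)) (· (Finset.mem_subtype.mpr hga'))

theorem isDiffuse_of_forall_fg {G : Type*} [Group G]
    (h : ∀ H : Subgroup G, H.FG → IsDiffuse H) : IsDiffuse G := by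
  classical
  intro A hA
  let H := Subgroup.closure (A : Set G)
  have hAH : ∀ x ∈ A, x ∈ H := fun x hx => Subgroup.subset_closure hx
  have hne : (A.subtype (· ∈ H)).Nonempty :=
    let ⟨x, hx⟩ := hA
    ⟨⟨x, hAH x hx⟩, Finset.mem_subtype.mpr hx⟩
  obtain ⟨a, ha⟩ := h H ⟨A, rfl⟩ _ hne
  exact ⟨a, isExtremalPoint_of_subtype hAH ha⟩

theorem zk_isDiffuse_general (G : Type*) [CommGroup G] [IsMulTorsionFree G] : IsDiffuse G := by
  refine isDiffuse_of_forall_fg fun H hH => ?_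
  have : Group.FG H := (Group.fg_iff_subgroup_fg H).mpr hH
  have : Monoid.FG H := Group.fg_iff_monoid_fg.mp this
  exact isDiffuse_of_uniqueProds H

/-- For every natural number `k`, the free abelian group `ℤᵏ` is diffuse. -/
theorem zk_isDiffuse (k : ℕ) : IsDiffuse (Multiplicative (Fin k → ℤ)) :=
  zk_isDiffuse_general _
end
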